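/- Suppose p = b+1 and 2 ≤ ℓ ≤ b+1 = p. Then the trace of the linear endomorphism f ↦ ρ(g·f) of W equals (1/π_ℓ)·{ e_ℓ(n_1−1, n_2−1, …, n_ℓ−1) + (−1)^{ℓ−1} }. -/

import Mathlib

open Finset MvPolynomial

noncomputable section

/-- Value of the elementary symmetric polynomial `e_k` at the family `v` restricted to `A`. -/
def esymVal {α F : Type*} [DecidableEq α] [CommRing F] (A : Finset α) (k : ℕ) (v : α → F) : F :=
  ∑ B ∈ A.powersetCard k, ∏ i ∈ B, v i

/-- Pochhammer symbol `(a)_k = a (a+1) ⋯ (a+k-1)`. -/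
def poch (a : ℚ) (k : ℕ) : ℚ := ∏ i ∈ Finset.range k, (a + (i : ℚ))

variable {p : ℕ}

/-- The index in `Fin (∑ t, n t)` of the `i`-th element of the `j`-th consecutive block. -/
def emb (n : Fin p → ℕ) (j : Fin p) (i : Fin (n j)) : Fin (∑ t, n t) :=
  ⟨(∑ t ∈ Finset.univ.filter (fun t => t < j), n t) + i, by
    have hj : j ∉ Finset.univ.filter (fun t => t < j) := by simp
    have h2 : ∑ t ∈ insert j (Finset.univ.filter (fun t => t < j)), n t ≤ ∑ t, n t :=
      Finset.sum_le_sum_of_subset (Finset.subset_univ _)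
    rw [Finset.sum_insert hj] at h2
    have := i.isLt
    omega⟩

/-- The Young subgroup: permutations mapping each block onto itself. -/
def youngGroup (n : Fin p → ℕ) : Finset (Equiv.Perm (Fin (∑ t, n t))) :=
  Finset.univ.filter fun w => ∀ (j : Fin p) (i : Fin (n j)), ∃ i' : Fin (n j),
    w (emb n j i) = emb n j i'

/-- The action of a permutation of the variables on polynomials, as a linear map. -/
def permAct {σ : Type*} (w : Equiv.Perm σ) :
    MvPolynomial σ ℚ →ₗ[ℚ] MvPolynomial σ ℚ :=
  (MvPolynomial.rename ⇑w).toLinearMap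

/-- Averaging operator over the Young subgroup. -/
def rho (n : Fin p → ℕ) :
    MvPolynomial (Fin (∑ t, n t)) ℚ →ₗ[ℚ] MvPolynomial (Fin (∑ t, n t)) ℚ :=
  ((youngGroup n).card : ℚ)⁻¹ • ∑ h ∈ youngGroup n, permAct h

/-- The alternating (Vandermonde) polynomial in the variables `x_{t 0}, …, x_{t b}`. -/
def Delta {N b : ℕ} (t : Fin (b + 1) → Fin N) : MvPolynomial (Fin N) ℚ :=
  ∏ q ∈ Finset.univ.filter (fun q : Fin (b + 1) × Fin (b + 1) => q.1 < q.2),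
    (X (t q.1) - X (t q.2))

/-- The span of all `Δ(x_{i₁},…,x_{i_{b+1}})` with `i₁ < ⋯ < i_{b+1}`. -/
def hookSpan (N b : ℕ) : Submodule ℚ (MvPolynomial (Fin N) ℚ) :=
  Submodule.span ℚ {f | ∃ t : Fin (b + 1) → Fin N, StrictMono t ∧ f = Delta t}

/-- The first `ℓ` block labels. -/
def firstL (p ℓ : ℕ) : Finset (Fin p) := Finset.univ.filter fun i => (i : ℕ) < ℓ


lemma perm_ai {α : Type*} (w : Equiv.Perm α) (a : α) : w (w⁻¹ a) = a := Equiv.apply_symm_apply w a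

lemma perm_ia {α : Type*} (w : Equiv.Perm α) (a : α) : w⁻¹ (w a) = a := Equiv.symm_apply_apply w a

lemma emb_lt (n : Fin p → ℕ) {j j' : Fin p} (h : j < j') (i : Fin (n j)) (i' : Fin (n j')) :
    (emb n j i : ℕ) < (emb n j' i' : ℕ) := by
  have hj : j ∉ Finset.univ.filter (fun t => t < j) := by simp
  have h2 : ∑ t ∈ insert j (Finset.univ.filter (fun t => t < j)), n t
      ≤ ∑ t ∈ Finset.univ.filter (fun t => t < j'), n t := by
    apply Finset.sum_le_sum_of_subset
    intro a ha
    simp only [Finset.mem_insert, Finset.mem_filter, Finset.mem_univ, true_and] at ha ⊢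
    rcases ha with rfl | ha
    · exact h
    · exact ha.trans h
  rw [Finset.sum_insert hj] at h2
  have := i.isLt
  simp only [emb]
  omega

lemma emb_bij (n : Fin p → ℕ) :
    Function.Bijective (fun x : (Σ j, Fin (n j)) => emb n x.1 x.2) := by
  rw [Fintype.bijective_iff_injective_and_card]
  refine ⟨?_, by simp⟩
  rintro ⟨j, i⟩ ⟨j', i'⟩ h
  have h' : (emb n j i : ℕ) = (emb n j' i' : ℕ) := congrArg Fin.val h
  rcases lt_trichotomy j j' with hlt | rfl | hlt
  · have := emb_lt n hlt i i'; omega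
  · simp only [emb] at h'
    have : i = i' := Fin.ext (by omega)
    rw [this]
  · have := emb_lt n hlt i' i; omega

/-- The blocks as an equivalence. -/
def embE (n : Fin p → ℕ) : (Σ j, Fin (n j)) ≃ Fin (∑ t, n t) := Equiv.ofBijective _ (emb_bij n)

lemma embE_apply (n : Fin p → ℕ) (j : Fin p) (i : Fin (n j)) : embE n ⟨j, i⟩ = emb n j i := rfl

/-- The block of an index. -/
def blk (n : Fin p → ℕ) (a : Fin (∑ t, n t)) : Fin p := ((embE n).symm a).1

lemma blk_emb (n : Fin p → ℕ) (j : Fin p) (i : Fin (n j)) : blk n (emb n j i) = j := by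
  rw [← embE_apply]; simp [blk]

lemma exists_emb (n : Fin p → ℕ) (a : Fin (∑ t, n t)) : ∃ i, emb n (blk n a) i = a :=
  ⟨((embE n).symm a).2, (embE n).apply_symm_apply a⟩

lemma exists_emb' (n : Fin p → ℕ) {a : Fin (∑ t, n t)} {j : Fin p} (h : blk n a = j) :
    ∃ i, emb n j i = a := by
  subst h; exact exists_emb n a

lemma mem_young (n : Fin p → ℕ) (w : Equiv.Perm (Fin (∑ t, n t))) :
    w ∈ youngGroup n ↔ ∀ a, blk n (w a) = blk n a := by
  simp only [youngGroup, Finset.mem_filter, Finset.mem_univ, true_and]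
  constructor
  · intro h a
    obtain ⟨i, hi⟩ := exists_emb n a
    obtain ⟨i', hi'⟩ := h (blk n a) i
    rw [hi] at hi'
    rw [hi', blk_emb]
  · intro h j i
    have := h (emb n j i)
    rw [blk_emb] at this
    obtain ⟨i', hi'⟩ := exists_emb' n this
    exact ⟨i', hi'.symm⟩

lemma card_blk (n : Fin p → ℕ) (j : Fin p) :
    (Finset.univ.filter (fun a => blk n a = j)).card = n j := by
  have : Finset.univ.filter (fun a => blk n a = j)
      = Finset.univ.image (fun i : Fin (n j) => emb n j i) := by
    ext a
    simp only [Finset.mem_filter, Finset.mem_univ, true_and, Finset.mem_image]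
    constructor
    · exact exists_emb' n
    · rintro ⟨i, rfl⟩; exact blk_emb n j i
  rw [this, Finset.card_image_of_injective]
  · simp
  · intro i i' h
    have h' : (emb n j i : ℕ) = (emb n j i' : ℕ) := congrArg Fin.val h
    simp only [emb] at h'
    exact Fin.ext (by omega)

lemma Delta_eq_det {N b : ℕ} (t : Fin (b + 1) → Fin N) :
    Delta t = (Matrix.vandermonde (fun i => -(X (t i) : MvPolynomial (Fin N) ℚ))).det := by
  rw [Matrix.det_vandermonde, Delta, Finset.prod_filter, ← Finset.univ_product_univ,
    Finset.prod_product]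
  refine Finset.prod_congr rfl fun i _ => ?_
  rw [← Finset.prod_filter]
  refine Finset.prod_congr ?_ fun j _ => by ring
  ext; simp

lemma vdm_perm {R : Type*} [CommRing R] {m : ℕ} (v : Fin m → R) (σ : Equiv.Perm (Fin m)) :
    (Matrix.vandermonde (fun i => v (σ i))).det
      = (Equiv.Perm.sign σ : ℤ) * (Matrix.vandermonde v).det := by
  rw [← Matrix.det_permute]; rfl

lemma Delta_perm {N b : ℕ} (t : Fin (b + 1) → Fin N) (σ : Equiv.Perm (Fin (b + 1))) :
    Delta (fun i => t (σ i)) = ((Equiv.Perm.sign σ : ℤ) : ℚ) • Delta t := by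
  rw [Delta_eq_det, Delta_eq_det, vdm_perm (fun i => -(X (t i) : MvPolynomial (Fin N) ℚ)) σ]
  rw [MvPolynomial.smul_eq_C_mul]; simp

lemma Delta_not_inj {N b : ℕ} (t : Fin (b + 1) → Fin N) (h : ¬ Function.Injective t) :
    Delta t = 0 := by
  rw [Delta_eq_det, Matrix.det_vandermonde_eq_zero_iff]
  simp only [Function.Injective, not_forall] at h
  obtain ⟨i, j, hij, hne⟩ := h
  exact ⟨i, j, by rw [hij], hne⟩

lemma permAct_Delta {N b : ℕ} (w : Equiv.Perm (Fin N)) (t : Fin (b + 1) → Fin N) :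
    permAct w (Delta t) = Delta (fun i => w (t i)) := by
  simp [permAct, Delta, map_prod]

lemma Delta_mem {N b : ℕ} (t : Fin (b + 1) → Fin N) : Delta t ∈ hookSpan N b := by
  by_cases h : Function.Injective t
  · have hm : StrictMono (t ∘ Tuple.sort t) :=
      (Tuple.monotone_sort t).strictMono_of_injective (h.comp (Tuple.sort t).injective)
    have h1 : Delta (t ∘ Tuple.sort t) ∈ hookSpan N b := Submodule.subset_span ⟨_, hm, rfl⟩
    have h2 := Delta_perm (t ∘ Tuple.sort t) (Tuple.sort t)⁻¹
    simp only [Function.comp_apply, perm_ai] at h2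
    have h3 : Delta t = Delta (fun i => t i) := rfl
    rw [h3, h2]
    exact Submodule.smul_mem _ _ h1
  · rw [Delta_not_inj t h]; exact Submodule.zero_mem _

lemma permAct_mem {N b : ℕ} (w : Equiv.Perm (Fin N)) {f} (hf : f ∈ hookSpan N b) :
    permAct w f ∈ hookSpan N b := by
  have : hookSpan N b ≤ (hookSpan N b).comap (permAct w) := by
    rw [hookSpan, Submodule.span_le]
    rintro _ ⟨t, -, rfl⟩
    show permAct w (Delta t) ∈ hookSpan N b
    rw [permAct_Delta]
    exact Delta_mem _
  exact this hf

lemma permAct_permAct {N : ℕ} (w w' : Equiv.Perm (Fin N)) (f : MvPolynomial (Fin N) ℚ) :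
    permAct w (permAct w' f) = permAct (w * w') f := by
  simp [permAct, rename_rename]

lemma rho_apply (n : Fin p → ℕ) (f : MvPolynomial (Fin (∑ t, n t)) ℚ) :
    rho n f = ((youngGroup n).card : ℚ)⁻¹ • ∑ h ∈ youngGroup n, permAct h f := by
  simp [rho]

lemma rho_permAct (n : Fin p → ℕ) (w) (hw : w ∈ youngGroup n) (f) :
    rho n (permAct w f) = rho n f := by
  rw [rho_apply, rho_apply]
  congr 1
  rw [mem_young] at hw
  refine Finset.sum_bij' (fun h _ => h * w) (fun h _ => h * w⁻¹) ?_ ?_ ?_ ?_ ?_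
  · intro h hh
    rw [mem_young] at hh ⊢
    intro a
    rw [Equiv.Perm.mul_apply, hh, hw]
  · intro h hh
    rw [mem_young] at hh ⊢
    intro a
    rw [Equiv.Perm.mul_apply, hh, ← hw, perm_ai]
  · intro h _; simp
  · intro h _; simp
  · intro h _; rw [permAct_permAct]

lemma rho_inv (n : Fin p → ℕ) (f) (hf : ∀ w ∈ youngGroup n, permAct w f = f) :
    rho n f = f := by
  rw [rho_apply, Finset.sum_congr rfl hf, Finset.sum_const, ← Nat.cast_smul_eq_nsmul ℚ, smul_smul,
    inv_mul_cancel₀, one_smul]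
  have : (1 : Equiv.Perm (Fin (∑ t, n t))) ∈ youngGroup n := by rw [mem_young]; intro a; rfl
  exact_mod_cast (Finset.card_pos.mpr ⟨_, this⟩).ne'

/-- Sections: one index from each block. -/
def secs {b : ℕ} (n : Fin (b + 1) → ℕ) : Finset (Fin (b + 1) → Fin (∑ t, n t)) :=
  Fintype.piFinset fun j => Finset.univ.filter (fun a => blk n a = j)

lemma mem_secs {b : ℕ} (n : Fin (b + 1) → ℕ) (t) : t ∈ secs n ↔ ∀ j, blk n (t j) = j := by
  simp [secs]

lemma card_secs {b : ℕ} (n : Fin (b + 1) → ℕ) : (secs n).card = ∏ j, n j := by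
  simp [secs, card_blk]

/-- The invariant vector. -/
def Finv {b : ℕ} (n : Fin (b + 1) → ℕ) : MvPolynomial (Fin (∑ t, n t)) ℚ :=
  ∑ t ∈ secs n, Delta t

lemma Finv_mem {b : ℕ} (n : Fin (b + 1) → ℕ) : Finv n ∈ hookSpan (∑ t, n t) b :=
  Submodule.sum_mem _ fun _ _ => Delta_mem _

lemma Finv_inv {b : ℕ} (n : Fin (b + 1) → ℕ) (w) (hw : w ∈ youngGroup n) :
    permAct w (Finv n) = Finv n := by
  rw [Finv, map_sum]
  rw [mem_young] at hw
  refine Finset.sum_bij' (fun t _ j => w (t j)) (fun t _ j => w⁻¹ (t j)) ?_ ?_ ?_ ?_ ?_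
  · intro t ht
    rw [mem_secs] at ht ⊢
    intro j; rw [hw, ht]
  · intro t ht
    rw [mem_secs] at ht ⊢
    intro j; rw [← hw, perm_ai, ht]
  · intro t _; simp
  · intro t _; simp
  · intro t _; exact permAct_Delta _ _

lemma exists_young {b : ℕ} (n : Fin (b + 1) → ℕ) (s t) (hs : s ∈ secs n) (ht : t ∈ secs n) :
    ∃ w ∈ youngGroup n, ∀ j, w (s j) = t j := by
  rw [mem_secs] at hs ht
  choose c hc using fun j => exists_emb' n (hs j)
  choose d hd using fun j => exists_emb' n (ht j)
  refine ⟨(embE n).permCongr (Equiv.sigmaCongrRight fun j => Equiv.swap (c j) (d j)), ?_, ?_⟩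
  · rw [mem_young]
    intro a
    simp [blk, Equiv.permCongr_apply]
  · intro j
    rw [← hc, ← hd, ← embE_apply, ← embE_apply, Equiv.permCongr_apply]
    simp

lemma rho_sec {b : ℕ} (n : Fin (b + 1) → ℕ) (hn : ∀ j, 0 < n j) (t) (ht : t ∈ secs n) :
    rho n (Delta t) = ((∏ j, n j : ℕ) : ℚ)⁻¹ • Finv n := by
  have h1 : rho n (Finv n) = ((∏ j, n j : ℕ) : ℚ) • rho n (Delta t) := by
    rw [Finv, map_sum, Nat.cast_smul_eq_nsmul, ← card_secs, ← Finset.sum_const]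
    refine Finset.sum_congr rfl fun s hs => ?_
    obtain ⟨w, hw, hwt⟩ := exists_young n s t hs ht
    rw [← rho_permAct n w hw, permAct_Delta]
    congr 2; funext j; exact hwt j
  rw [rho_inv n _ (Finv_inv n)] at h1
  rw [h1, smul_smul, inv_mul_cancel₀, one_smul]
  exact_mod_cast (Finset.prod_pos fun j _ => hn j).ne'

/-- The evaluated Vandermonde. -/
def DQ {b : ℕ} (s : Fin (b + 1) → Fin (b + 1)) : ℚ :=
  (Matrix.vandermonde (fun i => -((s i : ℕ) : ℚ))).det

lemma DQ_id_ne {b : ℕ} : DQ (fun i : Fin (b + 1) => i) ≠ 0 := by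
  rw [DQ, Matrix.det_vandermonde_ne_zero_iff]
  intro i j h
  simpa [Fin.val_inj] using h

lemma DQ_perm {b : ℕ} (σ : Equiv.Perm (Fin (b + 1))) :
    DQ (fun i => σ i) = ((Equiv.Perm.sign σ : ℤ) : ℚ) * DQ (fun i : Fin (b + 1) => i) :=
  vdm_perm (fun i : Fin (b + 1) => -((i : ℕ) : ℚ)) σ

lemma DQ_not_inj {b : ℕ} (s : Fin (b + 1) → Fin (b + 1)) (h : ¬ Function.Injective s) :
    DQ s = 0 := by
  rw [DQ, Matrix.det_vandermonde_eq_zero_iff]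
  simp only [Function.Injective, not_forall] at h
  obtain ⟨i, j, hij, hne⟩ := h
  exact ⟨i, j, by rw [hij], hne⟩

/-- Evaluation collapsing each block. -/
def evB {b : ℕ} (n : Fin (b + 1) → ℕ) : MvPolynomial (Fin (∑ t, n t)) ℚ →ₗ[ℚ] ℚ :=
  (MvPolynomial.aeval (fun a => ((blk n a : ℕ) : ℚ))).toLinearMap

lemma evB_Delta {b : ℕ} (n : Fin (b + 1) → ℕ) (t : Fin (b + 1) → Fin (∑ t, n t)) :
    evB n (Delta t) = DQ (fun i => blk n (t i)) := by
  rw [Delta_eq_det, DQ, evB, AlgHom.toLinearMap_apply, AlgHom.map_det]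
  congr 1
  ext i j
  simp [Matrix.vandermonde_apply]

lemma rho_Delta {b : ℕ} (n : Fin (b + 1) → ℕ) (hn : ∀ j, 0 < n j)
    (t : Fin (b + 1) → Fin (∑ t, n t)) :
    rho n (Delta t) = (((∏ j, n j : ℕ) : ℚ)⁻¹ * (DQ (fun i : Fin (b + 1) => i))⁻¹ * evB n (Delta t))
      • Finv n := by
  rw [evB_Delta]
  by_cases hinj : Function.Injective (fun i => blk n (t i))
  · have hb := Finite.injective_iff_bijective.mp hinj
    set σ := Equiv.ofBijective _ hb with hσ
    have hσa : ∀ i, blk n (t i) = σ i := fun i => rfl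
    have h1 : (fun i => t (σ⁻¹ i)) ∈ secs n := by
      rw [mem_secs]; intro j; rw [hσa, perm_ai]
    have h2 := Delta_perm (fun i => t (σ⁻¹ i)) σ
    simp only [perm_ia] at h2
    have h3 : Delta t = Delta (fun i => t i) := rfl
    rw [h3, h2, map_smul, rho_sec n hn _ h1, smul_smul]
    congr 1
    have h4 : (fun i => blk n (t i)) = fun i => σ i := rfl
    rw [h4, DQ_perm]
    have := DQ_id_ne (b := b)
    field_simp
  · rw [DQ_not_inj _ hinj, mul_zero, zero_smul]
    by_cases ht : Function.Injective t
    · simp only [Function.Injective, not_forall] at hinj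
      obtain ⟨i, j, hij, hne⟩ := hinj
      have hw : Equiv.swap (t i) (t j) ∈ youngGroup n := by
        rw [mem_young]
        intro a
        rw [Equiv.swap_apply_def]
        split_ifs with h1 h2
        · rw [h1, hij]
        · rw [h2, hij]
        · rfl
      have h1 := rho_permAct n _ hw (Delta t)
      rw [permAct_Delta] at h1
      have h2 : (fun k => Equiv.swap (t i) (t j) (t k)) = fun k => t (Equiv.swap i j k) := by
        funext k
        exact (ht.map_swap i j k).symm
      rw [h2, Delta_perm, Equiv.Perm.sign_swap hne] at h1
      simp only [Units.val_neg, Units.val_one, Int.cast_neg, Int.cast_one, neg_smul, one_smul,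
        map_neg] at h1
      exact self_eq_neg.mp h1.symm
    · rw [Delta_not_inj t ht, map_zero]

lemma rho_hook {b : ℕ} (n : Fin (b + 1) → ℕ) (hn : ∀ j, 0 < n j) (f)
    (hf : f ∈ hookSpan (∑ t, n t) b) :
    rho n f = (((∏ j, n j : ℕ) : ℚ)⁻¹ * (DQ (fun i : Fin (b + 1) => i))⁻¹ * evB n f)
      • Finv n := by
  induction hf using Submodule.span_induction with
  | mem x hx => obtain ⟨t, -, rfl⟩ := hx; exact rho_Delta n hn t
  | zero => simp
  | add x y _ _ hx hy => rw [map_add, hx, hy, map_add, mul_add, add_smul]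
  | smul a x _ hx => rw [map_smul, hx, map_smul, smul_smul, smul_eq_mul]; congr 1; ring

instance hookSpan_finite (N b : ℕ) : Module.Finite ℚ (hookSpan N b) := by
  apply Module.Finite.span_of_finite
  have : {f : MvPolynomial (Fin N) ℚ | ∃ t : Fin (b + 1) → Fin N, StrictMono t ∧ f = Delta t}
      ⊆ Set.range (Delta : (Fin (b + 1) → Fin N) → _) := by
    rintro _ ⟨t, -, rfl⟩; exact ⟨t, rfl⟩
  exact (Set.finite_range _).subset this

lemma trace_eq {b : ℕ} (n : Fin (b + 1) → ℕ) (hn : ∀ j, 0 < n j)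
    (g : Equiv.Perm (Fin (∑ t, n t)))
    (hW : ∀ f ∈ hookSpan (∑ t, n t) b,
      ((rho n).comp (permAct g)) f ∈ hookSpan (∑ t, n t) b) :
    LinearMap.trace ℚ (hookSpan (∑ t, n t) b) (((rho n).comp (permAct g)).restrict hW)
      = ((∏ j, n j : ℕ) : ℚ)⁻¹ * (DQ (fun i : Fin (b + 1) => i))⁻¹ *
        ∑ t ∈ secs n, DQ (fun i => blk n (g (t i))) := by
  set c : ℚ := ((∏ j, n j : ℕ) : ℚ)⁻¹ * (DQ (fun i : Fin (b + 1) => i))⁻¹ with hc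
  set φ : hookSpan (∑ t, n t) b →ₗ[ℚ] ℚ :=
    c • ((evB n).comp (permAct g)).comp (hookSpan (∑ t, n t) b).subtype with hφ
  have h1 : ((rho n).comp (permAct g)).restrict hW = φ.smulRight ⟨Finv n, Finv_mem n⟩ := by
    ext1 f
    apply Subtype.ext
    have := rho_hook n hn (permAct g f) (permAct_mem g f.2)
    simpa [hφ, hc] using this
  rw [h1, LinearMap.trace_smulRight]
  simp [hφ, Finv, map_sum, permAct_Delta, evB_Delta]

lemma card_filter_secs {b : ℕ} (n : Fin (b + 1) → ℕ)
    (P : Fin (b + 1) → Fin (∑ t, n t) → Prop) [∀ j a, Decidable (P j a)] :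
    ∑ t ∈ secs n, (if ∀ j, P j (t j) then (1 : ℚ) else 0)
      = ∏ j, (((Finset.univ.filter (fun a => blk n a = j)).filter (P j)).card : ℚ) := by
  rw [Finset.sum_boole, ← Nat.cast_prod, ← Fintype.card_piFinset]
  congr 2
  ext t
  simp [secs, forall_and]

theorem sphericalFunction_hook_p_eq_b_add_one (p b ℓ : ℕ) (n : Fin p → ℕ) (hn : ∀ j, 0 < n j)
    (hp : p = b + 1) (hℓ2 : 2 ≤ ℓ) (hℓp : ℓ ≤ b + 1)
    (g : Equiv.Perm (Fin (∑ t, n t)))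
    (hg1 : ∀ j k : Fin p, (k : ℕ) = (j : ℕ) + 1 → (k : ℕ) < ℓ →
      g (emb n j ⟨0, hn j⟩) = emb n k ⟨0, hn k⟩)
    (hg2 : ∀ j j' : Fin p, (j : ℕ) = ℓ - 1 → (j' : ℕ) = 0 →
      g (emb n j ⟨0, hn j⟩) = emb n j' ⟨0, hn j'⟩)
    (hg3 : ∀ a, (∀ j : Fin p, (j : ℕ) < ℓ → a ≠ emb n j ⟨0, hn j⟩) → g a = a)
    (hW : ∀ f ∈ hookSpan (∑ t, n t) b,
      ((rho n).comp (permAct g)) f ∈ hookSpan (∑ t, n t) b) :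
    LinearMap.trace ℚ (hookSpan (∑ t, n t) b) (((rho n).comp (permAct g)).restrict hW)
      = (∏ i ∈ firstL p ℓ, (n i : ℚ))⁻¹ *
        (esymVal (firstL p ℓ) ℓ (fun i => (n i : ℚ) - 1) + (-1 : ℚ) ^ (ℓ - 1)) := by
  subst hp
  rw [trace_eq n hn g hW]
  set t0 : Fin (b + 1) → Fin (∑ t, n t) := fun j => emb n j ⟨0, hn j⟩ with ht0
  have hblk0 : ∀ j, blk n (t0 j) = j := fun j => blk_emb n j _
  set L : Fin (b + 1) := ⟨ℓ - 1, by omega⟩ with hL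
  set σ : Equiv.Perm (Fin (b + 1)) := Fin.cycleRange L with hσ
  have hLv : (L : ℕ) = ℓ - 1 := rfl
  have hσlt : ∀ j : Fin (b + 1), (j : ℕ) + 1 < ℓ → (σ j : ℕ) = j + 1 := by
    intro j hj
    exact Fin.coe_cycleRange_of_lt (Fin.lt_def.mpr (by omega))
  have hσeq : ∀ j : Fin (b + 1), (j : ℕ) + 1 = ℓ → (σ j : ℕ) = 0 := by
    intro j hj
    rw [hσ, Fin.cycleRange_of_eq (Fin.ext (by omega))]; rfl
  have hσgt : ∀ j : Fin (b + 1), ℓ ≤ (j : ℕ) → σ j = j := by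
    intro j hj
    exact Fin.cycleRange_of_gt (Fin.lt_def.mpr (by omega))
  have hgt : ∀ j : Fin (b + 1), (j : ℕ) < ℓ → g (t0 j) = t0 (σ j) := by
    intro j hj
    by_cases h : (j : ℕ) + 1 < ℓ
    · exact hg1 j (σ j) (hσlt j h) (by rw [hσlt j h]; exact h)
    · exact hg2 j (σ j) (by omega) (hσeq j (by omega))
  have hval : ∀ t ∈ secs n, ∀ j : Fin (b + 1), blk n (g (t j))
      = if (j : ℕ) < ℓ ∧ t j = t0 j then σ j else j := by
    intro t ht j
    rw [mem_secs] at ht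
    split_ifs with h
    · rw [h.2, hgt j h.1, hblk0]
    · rw [hg3, ht]
      intro k hk hjk
      have : k = j := by rw [← ht j, hjk, blk_emb]
      subst this
      exact h ⟨hk, hjk⟩
  have hkey : ∀ t ∈ secs n, DQ (fun i => blk n (g (t i))) = DQ (fun i : Fin (b + 1) => i) *
      ((if ∀ j : Fin (b + 1), (j : ℕ) < ℓ → t j ≠ t0 j then (1 : ℚ) else 0) + (-1) ^ (ℓ - 1) *
        (if ∀ j : Fin (b + 1), (j : ℕ) < ℓ → t j = t0 j then (1 : ℚ) else 0)) := by
    intro t ht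
    rw [show (fun i => blk n (g (t i))) = fun j : Fin (b + 1) =>
      if (j : ℕ) < ℓ ∧ t j = t0 j then σ j else j from
      funext (hval t ht)]
    by_cases hA : ∀ j : Fin (b + 1), (j : ℕ) < ℓ → t j ≠ t0 j
    · have hB : ¬ ∀ j : Fin (b + 1), (j : ℕ) < ℓ → t j = t0 j := by
        intro h
        exact hA L (by omega) (h L (by omega))
      rw [if_pos hA, if_neg hB, mul_zero, add_zero, mul_one]
      congr 1
      funext j
      rw [if_neg]
      rintro ⟨h1, h2⟩
      exact hA j h1 h2
    · by_cases hB : ∀ j : Fin (b + 1), (j : ℕ) < ℓ → t j = t0 j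
      · rw [if_neg hA, if_pos hB, zero_add, mul_one]
        have : (fun j : Fin (b + 1) => if (j : ℕ) < ℓ ∧ t j = t0 j then σ j else j)
            = fun j => σ j := by
          funext j
          by_cases hj : (j : ℕ) < ℓ
          · rw [if_pos ⟨hj, hB j hj⟩]
          · rw [if_neg (fun h => hj h.1), hσgt j (by omega)]
        rw [this, DQ_perm, hσ, Fin.sign_cycleRange]
        push_cast
        rw [mul_comm]
      · rw [if_neg hA, if_neg hB]
        simp only [mul_zero, add_zero]
        apply DQ_not_inj
        intro hinj
        have hstep : ∀ j : Fin (b + 1), (j : ℕ) < ℓ → t j = t0 j → t (σ j) = t0 (σ j) := by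
          intro j hj hjt
          by_contra hcon
          have h1 : (fun j : Fin (b + 1) => if (j : ℕ) < ℓ ∧ t j = t0 j then σ j else j) j
              = (fun j : Fin (b + 1) => if (j : ℕ) < ℓ ∧ t j = t0 j then σ j else j) (σ j) := by
            simp only []
            rw [if_pos ⟨hj, hjt⟩, if_neg (fun h => hcon h.2)]
          have h2 := hinj h1
          rw [← h2] at hcon
          exact hcon hjt
        push Not at hA
        obtain ⟨j, hj, hjt⟩ := hA
        have hup : ∀ (j : Fin (b + 1)), t j = t0 j → ∀ d : ℕ, ∀ k : Fin (b + 1),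
            (k : ℕ) = j + d → (k : ℕ) < ℓ → t k = t0 k := by
          intro j hjt d
          induction d with
          | zero =>
            intro k hk _
            have : k = j := Fin.ext (by omega)
            rw [this]; exact hjt
          | succ d ih =>
            intro k hk hkl
            have h1 := ih ⟨j + d, by omega⟩ rfl (by simp only []; omega)
            have h2 := hstep ⟨j + d, by omega⟩ (by simp only []; omega) h1
            have h3 : σ ⟨j + d, by omega⟩ = k := by
              apply Fin.ext
              rw [hσlt _ (by simp only []; omega), hk]; rfl
            rw [h3] at h2
            exact h2
        have hLt : t L = t0 L := hup j hjt (ℓ - 1 - j) L (by omega) (by omega)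
        have h0 := hstep L (by omega) hLt
        apply hB
        intro k hk
        exact hup (σ L) h0 k k (by rw [hσeq L (by omega)]; omega) hk
  rw [Finset.sum_congr rfl hkey, ← Finset.mul_sum, Finset.sum_add_distrib, ← Finset.mul_sum]
  rw [card_filter_secs n (fun j a => (j : ℕ) < ℓ → a ≠ t0 j),
    card_filter_secs n (fun j a => (j : ℕ) < ℓ → a = t0 j)]
  have hc1 : ∀ j : Fin (b + 1), (((Finset.univ.filter (fun a => blk n a = j)).filter
      (fun a => (j : ℕ) < ℓ → a ≠ t0 j)).card : ℚ)
      = if (j : ℕ) < ℓ then (n j : ℚ) - 1 else n j := by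
    intro j
    split_ifs with h
    · have : (Finset.univ.filter (fun a => blk n a = j)).filter (fun a => (j : ℕ) < ℓ → a ≠ t0 j)
          = (Finset.univ.filter (fun a => blk n a = j)).erase (t0 j) := by
        ext a
        simp [h, and_comm]
      rw [this, Finset.card_erase_of_mem (by simp [hblk0]), card_blk, Nat.cast_sub (hn j),
        Nat.cast_one]
    · rw [Finset.filter_true_of_mem (fun a _ h' => absurd h' h), card_blk]
  have hc2 : ∀ j : Fin (b + 1), (((Finset.univ.filter (fun a => blk n a = j)).filter
      (fun a => (j : ℕ) < ℓ → a = t0 j)).card : ℚ)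
      = if (j : ℕ) < ℓ then 1 else (n j : ℚ) := by
    intro j
    split_ifs with h
    · have : (Finset.univ.filter (fun a => blk n a = j)).filter (fun a => (j : ℕ) < ℓ → a = t0 j)
          = {t0 j} := by
        ext a
        simp only [h, Finset.mem_filter, Finset.mem_univ, true_and, forall_const,
          Finset.mem_singleton]
        constructor
        · exact fun h => h.2
        · rintro rfl; exact ⟨hblk0 j, rfl⟩
      rw [this]; simp
    · rw [Finset.filter_true_of_mem (fun a _ h' => absurd h' h), card_blk]
  have hcard : (firstL (b + 1) ℓ).card = ℓ := by
    have : (firstL (b + 1) ℓ) = Finset.univ.image (Fin.castLE hℓp) := by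
      ext a
      simp only [firstL, Finset.mem_filter, Finset.mem_univ, true_and, Finset.mem_image]
      constructor
      · intro h; exact ⟨⟨a, h⟩, rfl⟩
      · rintro ⟨i, rfl⟩; exact i.2
    rw [this, Finset.card_image_of_injective _ (Fin.castLE_injective hℓp)]
    simp
  have hes : esymVal (firstL (b + 1) ℓ) ℓ (fun i => (n i : ℚ) - 1)
      = ∏ i ∈ firstL (b + 1) ℓ, ((n i : ℚ) - 1) := by
    unfold esymVal
    have := Finset.powersetCard_self (firstL (b + 1) ℓ)
    rw [hcard] at this
    rw [this, Finset.sum_singleton]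
  have hsplit : ((∏ j, n j : ℕ) : ℚ) = (∏ i ∈ firstL (b + 1) ℓ, (n i : ℚ)) *
      ∏ i ∈ Finset.univ.filter (fun i : Fin (b + 1) => ¬ (i : ℕ) < ℓ), (n i : ℚ) := by
    rw [firstL, Finset.prod_filter_mul_prod_filter_not, Nat.cast_prod]
  rw [Finset.prod_congr rfl (fun j _ => hc1 j), Finset.prod_congr rfl (fun j _ => hc2 j),
    Finset.prod_ite, Finset.prod_ite, hes, hsplit, Finset.prod_const_one]
  have hD := DQ_id_ne (b := b)
  have hn' : ∀ i, (n i : ℚ) ≠ 0 := fun i => by exact_mod_cast (hn i).ne'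
  have h1 : (∏ i ∈ firstL (b + 1) ℓ, (n i : ℚ)) ≠ 0 := Finset.prod_ne_zero_iff.mpr fun i _ => hn' i
  have h2 : (∏ i ∈ Finset.univ.filter (fun i : Fin (b + 1) => ¬ (i : ℕ) < ℓ), (n i : ℚ)) ≠ 0 :=
    Finset.prod_ne_zero_iff.mpr fun i _ => hn' i
  change _ * (_ * ((∏ i ∈ firstL (b + 1) ℓ, ((n i : ℚ) - 1)) * _ + _)) = _
  generalize (∏ i ∈ firstL (b + 1) ℓ, ((n i : ℚ) - 1)) = A at *
  field_simp

end
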